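/- Every integral lattice L with Λ3 ⊆ L ⊆ V is isometric (via a linear isometry of ℝ^4) to one of the four lattices: Λ3; Λ3 + ℤ·(ε1−ε2)/√2; Λ3 + ℤ·(ε1−ε2+ε3−ε4)/√2; and Λ3 + ℤ·(ε1−ε2)/√2 + ℤ·(ε3−ε4)/√2. -/

import Mathlib

noncomputable section

open scoped RealInnerProductSpace

/-- `ℝ^n` with the standard inner product. -/
abbrev E (n : ℕ) := EuclideanSpace ℝ (Fin n)

/-- The standard basis vector `ε i`. -/
def εv {n : ℕ} (i : Fin n) : E n := EuclideanSpace.single i 1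

/-- The vector of `ℝ^n` with the given coordinates. -/
def vec {n : ℕ} (x : Fin n → ℝ) : E n := (WithLp.equiv 2 (Fin n → ℝ)).symm x

/-- The vector of `ℝ^n` with the given integer coordinates. -/
def intVec {n : ℕ} (x : Fin n → ℤ) : E n := (WithLp.equiv 2 (Fin n → ℝ)).symm fun i => (x i : ℝ)

/-- A lattice is integral if all pairwise inner products of its elements are integers. -/
def LatticeIsIntegral {n : ℕ} (L : Submodule ℤ (E n)) : Prop :=
  ∀ x ∈ L, ∀ y ∈ L, ∃ k : ℤ, ⟪x, y⟫ = (k : ℝ)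

/-- Two lattices are isometric if a linear isometry of the ambient space carries
one onto the other. -/
def IsometricLattices {n : ℕ} (L M : Submodule ℤ (E n)) : Prop :=
  ∃ g : E n ≃ₗᵢ[ℝ] E n, g '' (L : Set (E n)) = (M : Set (E n))

/-- The laminated lattice `Λ₃ = {√2·x : x ∈ ℤ⁴, x 0 + x 1 + x 2 + x 3 = 0} ≅ √2·A₃`. -/
def Λ3 : Submodule ℤ (E 4) :=
  Submodule.span ℤ
    {v : E 4 | ∃ x : Fin 4 → ℤ, x 0 + x 1 + x 2 + x 3 = 0 ∧ v = Real.sqrt 2 • intVec x}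

/-- `(ε1 - ε2)/√2`. -/
def u12 : E 4 := (Real.sqrt 2)⁻¹ • (εv 0 - εv 1)
/-- `(ε3 - ε4)/√2`. -/
def u34 : E 4 := (Real.sqrt 2)⁻¹ • (εv 2 - εv 3)
/-- `(ε1 - ε2 + ε3 - ε4)/√2`. -/
def w : E 4 := (Real.sqrt 2)⁻¹ • (εv 0 - εv 1 + εv 2 - εv 3)

/-- The vector `y/√2`. -/
def hv (y : Fin 4 → ℤ) : E 4 := (Real.sqrt 2)⁻¹ • intVec y

lemma hv_apply (y : Fin 4 → ℤ) (i : Fin 4) : hv y i = (Real.sqrt 2)⁻¹ * (y i : ℝ) := by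
  simp [hv, intVec]

lemma hv_sub (y z : Fin 4 → ℤ) : hv (y - z) = hv y - hv z := by
  ext i
  simp [hv_apply, mul_sub]

lemma inv_mul_inv_sqrt_two : (Real.sqrt 2)⁻¹ * (Real.sqrt 2)⁻¹ = 1 / 2 := by
  rw [← mul_inv, Real.mul_self_sqrt (by norm_num)]; norm_num

lemma u12_eq : u12 = hv ![1, -1, 0, 0] := by
  ext i
  fin_cases i <;> simp [u12, εv, hv_apply]

lemma u34_eq : u34 = hv ![0, 0, 1, -1] := by
  ext i
  fin_cases i <;> simp [u34, εv, hv_apply]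

lemma w_eq : w = hv ![1, -1, 1, -1] := by
  ext i
  fin_cases i <;> simp [w, εv, hv_apply]

lemma inner_hv (y z : Fin 4 → ℤ) :
    ⟪hv y, hv z⟫ = ((y 0 * z 0 + y 1 * z 1 + y 2 * z 2 + y 3 * z 3 : ℤ) : ℝ) / 2 := by
  simp only [PiLp.inner_apply, hv_apply, Fin.sum_univ_four, RCLike.inner_apply, conj_trivial]
  push_cast
  linear_combination ((y 0 : ℝ) * z 0 + y 1 * z 1 + y 2 * z 2 + y 3 * z 3) * inv_mul_inv_sqrt_two

/-- Even vectors of sum zero give elements of `Λ3`. -/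
lemma hv_mem_Λ3 (y : Fin 4 → ℤ) (hs : y 0 + y 1 + y 2 + y 3 = 0) (he : ∀ i, 2 ∣ y i) :
    hv y ∈ Λ3 := by
  choose z hz using he
  apply Submodule.subset_span
  refine ⟨z, ?_, ?_⟩
  · have := hz 0; have := hz 1; have := hz 2; have := hz 3
    omega
  · ext i
    have h2 : Real.sqrt 2 * Real.sqrt 2 = 2 := Real.mul_self_sqrt (by norm_num)
    have h0 : Real.sqrt 2 ≠ 0 := by positivity
    simp only [hv_apply, hz i, intVec]
    push_cast
    simp only [PiLp.smul_apply, smul_eq_mul, WithLp.equiv_symm_apply]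
    field_simp
    linear_combination -(z i : ℝ) * h2

/-- The hypotheses of the theorem. -/
def Good (L : Submodule ℤ (E 4)) : Prop :=
  LatticeIsIntegral L ∧ Λ3 ≤ L ∧ ∀ x ∈ L, x 0 + x 1 + x 2 + x 3 = 0

lemma Good.exists_hv {L : Submodule ℤ (E 4)} (hG : Good L) {x : E 4} (hx : x ∈ L) :
    ∃ y : Fin 4 → ℤ, y 0 + y 1 + y 2 + y 3 = 0 ∧ x = hv y := by
  obtain ⟨hI, hΛ, hV⟩ := hG
  have hs := hV x hx
  have h2 : Real.sqrt 2 * Real.sqrt 2 = 2 := Real.mul_self_sqrt (by norm_num)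
  have h0 : Real.sqrt 2 ≠ 0 := by positivity
  set s := Real.sqrt 2 with hsdef
  have hi : s⁻¹ * 2 = s := by field_simp; linarith
  obtain ⟨a, ha⟩ := hI x hx _ (hΛ (hv_mem_Λ3 ![2, -2, 0, 0] (by simp)
    (by intro i; fin_cases i <;> simp)))
  obtain ⟨b, hb⟩ := hI x hx _ (hΛ (hv_mem_Λ3 ![2, 0, -2, 0] (by simp)
    (by intro i; fin_cases i <;> simp)))
  obtain ⟨c, hc⟩ := hI x hx _ (hΛ (hv_mem_Λ3 ![2, 0, 0, -2] (by simp)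
    (by intro i; fin_cases i <;> simp)))
  obtain ⟨n, hn⟩ := hI x hx x hx
  simp [PiLp.inner_apply, hv_apply, Fin.sum_univ_four, ← hsdef, hi] at ha hb hc
  simp only [PiLp.inner_apply, Fin.sum_univ_four, RCLike.inner_apply, conj_trivial] at hn
  have e1 : s * x 1 = s * x 0 - a := by linarith
  have e2 : s * x 2 = s * x 0 - b := by linarith
  have e3 : s * x 3 = s * x 0 - c := by linarith
  have e0 : 4 * (s * x 0) = a + b + c := by linear_combination s * hs - e1 - e2 - e3
  have hnn : (s * x 0) ^ 2 + (s * x 1) ^ 2 + (s * x 2) ^ 2 + (s * x 3) ^ 2 = 2 * n := by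
    linear_combination 2 * hn + (x 0 ^ 2 + x 1 ^ 2 + x 2 ^ 2 + x 3 ^ 2) * h2
  rw [e1, e2, e3] at hnn
  have hm : ((a + b + c) ^ 2 : ℤ) = 4 * (a ^ 2 + b ^ 2 + c ^ 2 - 2 * n) := by
    have : (((a + b + c) ^ 2 : ℤ) : ℝ) = ((4 * (a ^ 2 + b ^ 2 + c ^ 2 - 2 * n) : ℤ) : ℝ) := by
      push_cast
      have e0' : s * x 0 = (a + b + c) / 4 := by linarith
      rw [e0'] at hnn
      linear_combination -4 * hnn
    exact_mod_cast this
  have hev : (2 : ℤ) ∣ a + b + c := by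
    apply Int.prime_two.dvd_of_dvd_pow (n := 2)
    rw [hm]; exact ⟨2 * (a ^ 2 + b ^ 2 + c ^ 2 - 2 * n), by ring⟩
  obtain ⟨m, hm'⟩ := hev
  have hmm : m ^ 2 = a ^ 2 + b ^ 2 + c ^ 2 - 2 * n := by
    rw [hm'] at hm; linarith
  have hev2 : (2 : ℤ) ∣ m := by
    apply Int.prime_two.dvd_of_dvd_pow (n := 2)
    have : m ^ 2 = 2 * (2 * m ^ 2 - (a * b + a * c + b * c) - n) := by
      have h4 : (a + b + c) ^ 2 = 4 * m ^ 2 := by rw [hm']; ring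
      linear_combination hmm + h4
    exact ⟨_, this⟩
  obtain ⟨q, hq⟩ := hev2
  have hx0 : s * x 0 = q := by
    have : ((a + b + c : ℤ) : ℝ) = ((4 * q : ℤ) : ℝ) := by
      rw [hm', hq]; push_cast; ring
    push_cast at this
    linarith
  rw [hx0] at e1 e2 e3
  refine ⟨![q, q - a, q - b, q - c], ?_, ?_⟩
  · simp; omega
  · ext i
    rw [hv_apply, ← hsdef, eq_inv_mul_iff_mul_eq₀ h0]
    fin_cases i
    · simpa using hx0
    · simpa using e1
    · simpa using e2
    · simpa using e3

lemma Good.hv_congr {L : Submodule ℤ (E 4)} (hG : Good L) {y z : Fin 4 → ℤ} (hy : hv y ∈ L)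
    (hsy : y 0 + y 1 + y 2 + y 3 = 0)
    (hs : z 0 + z 1 + z 2 + z 3 = 0) (he : ∀ i, 2 ∣ y i - z i) : hv z ∈ L := by
  have h : hv (y - z) ∈ L := hG.2.1 (hv_mem_Λ3 _ (by simp; omega) (by simpa using he))
  rw [hv_sub] at h
  simpa using L.sub_mem hy h

lemma mem_of_congr {M : Submodule ℤ (E 4)} (hM : Λ3 ≤ M) {y z : Fin 4 → ℤ} (hz : hv z ∈ M)
    (hsy : y 0 + y 1 + y 2 + y 3 = 0)
    (hs : z 0 + z 1 + z 2 + z 3 = 0) (he : ∀ i, 2 ∣ y i - z i) : hv y ∈ M := by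
  have h : hv (y - z) ∈ M := hM (hv_mem_Λ3 _ (by simp; omega) (by simpa using he))
  rw [hv_sub] at h
  simpa using M.add_mem h hz

lemma Good.even_inner {L : Submodule ℤ (E 4)} (hG : Good L) {y z : Fin 4 → ℤ} (hy : hv y ∈ L)
    (hz : hv z ∈ L) : 2 ∣ y 0 * z 0 + y 1 * z 1 + y 2 * z 2 + y 3 * z 3 := by
  obtain ⟨k, hk⟩ := hG.1 _ hy _ hz
  rw [inner_hv, div_eq_iff (by norm_num)] at hk
  refine ⟨k, ?_⟩
  have : ((y 0 * z 0 + y 1 * z 1 + y 2 * z 2 + y 3 * z 3 : ℤ) : ℝ) = ((2 * k : ℤ) : ℝ) := by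
    rw [hk]; push_cast; ring
  exact_mod_cast this

lemma isometric_refl (L : Submodule ℤ (E 4)) : IsometricLattices L L :=
  ⟨LinearIsometryEquiv.refl ℝ _, by simp⟩

lemma forall_four {p : Fin 4 → Prop} (h0 : p 0) (h1 : p 1) (h2 : p 2) (h3 : p 3) : ∀ i, p i := by
  intro i; fin_cases i <;> assumption

/-- The case where `u12 ∈ L`. -/
lemma case_u12 (L : Submodule ℤ (E 4)) (hG : Good L) (hu : u12 ∈ L) :
    L = Λ3 ⊔ Submodule.span ℤ {u12} ∨ L = Λ3 ⊔ Submodule.span ℤ {u12, u34} := by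
  have hpar : ∀ y : Fin 4 → ℤ, y 0 + y 1 + y 2 + y 3 = 0 → hv y ∈ L →
      2 ∣ y 0 - y 1 ∧ 2 ∣ y 2 - y 3 := by
    intro y hs hy
    rw [u12_eq] at hu
    have := hG.even_inner hy hu
    simp at this
    omega
  by_cases h : ∃ y : Fin 4 → ℤ, y 0 + y 1 + y 2 + y 3 = 0 ∧ hv y ∈ L ∧ ¬ 2 ∣ y 2
  · right
    obtain ⟨y, hs, hy, h2⟩ := h
    have hp := hpar y hs hy
    have h34 : u34 ∈ L := by
      by_cases h0 : 2 ∣ y 0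
      · rw [u34_eq]
        apply hG.hv_congr hy hs (by simp)
        apply forall_four <;> simp <;> omega
      · have hw : hv ![1, -1, 1, -1] ∈ L := by
          apply hG.hv_congr hy hs (by simp)
          apply forall_four <;> simp <;> omega
        have : u34 = hv ![1, -1, 1, -1] - u12 := by
          rw [u34_eq, u12_eq, ← hv_sub]; congr 1; ext i; fin_cases i <;> simp
        rw [this]
        exact L.sub_mem hw hu
    apply le_antisymm
    · intro x hx
      obtain ⟨y, hs, rfl⟩ := hG.exists_hv hx
      have hp := hpar y hs hx
      have hM : Λ3 ≤ Λ3 ⊔ Submodule.span ℤ {u12, u34} := le_sup_left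
      have m1 : u12 ∈ Λ3 ⊔ Submodule.span ℤ {u12, u34} :=
        (le_sup_right : _ ≤ Λ3 ⊔ _) (Submodule.subset_span (by simp))
      have m2 : u34 ∈ Λ3 ⊔ Submodule.span ℤ {u12, u34} :=
        (le_sup_right : _ ≤ Λ3 ⊔ _) (Submodule.subset_span (by simp))
      have m3 : hv ![1, -1, 1, -1] ∈ Λ3 ⊔ Submodule.span ℤ {u12, u34} := by
        have : hv ![1, -1, 1, -1] = u12 - hv ![0, 0, -1, 1] := by
          rw [u12_eq, ← hv_sub]; congr 1; ext i; fin_cases i <;> simp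
        have h' : hv ![0, 0, -1, 1] = u34 - (u34 + u34) := by
          rw [u34_eq]; ext i; fin_cases i <;> simp [hv_apply]
        rw [this, h']
        exact Submodule.sub_mem _ m1 (Submodule.sub_mem _ m2 (Submodule.add_mem _ m2 m2))
      rw [u12_eq] at m1 hM m3 m2 ⊢
      rw [u34_eq] at m1 hM m3 m2 ⊢
      by_cases h0 : 2 ∣ y 0 <;> by_cases h2 : 2 ∣ y 2
      · apply hM
        apply hv_mem_Λ3 _ hs
        apply forall_four <;> omega
      · apply mem_of_congr hM m2 hs (by simp)
        apply forall_four <;> simp <;> omega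
      · apply mem_of_congr hM m1 hs (by simp)
        apply forall_four <;> simp <;> omega
      · apply mem_of_congr hM m3 hs (by simp)
        apply forall_four <;> simp <;> omega
    · refine sup_le hG.2.1 (Submodule.span_le.2 ?_)
      rintro x (rfl | rfl)
      · exact hu
      · exact h34
  · left
    push Not at h
    apply le_antisymm
    · intro x hx
      obtain ⟨y, hs, rfl⟩ := hG.exists_hv hx
      have hp := hpar y hs hx
      have h2 := h y hs hx
      have hM : Λ3 ≤ Λ3 ⊔ Submodule.span ℤ {u12} := le_sup_left
      have m1 : u12 ∈ Λ3 ⊔ Submodule.span ℤ {u12} :=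
        (le_sup_right : _ ≤ Λ3 ⊔ _) (Submodule.subset_span (by simp))
      rw [u12_eq] at m1 hM ⊢
      by_cases h0 : 2 ∣ y 0
      · apply hM
        apply hv_mem_Λ3 _ hs
        apply forall_four <;> omega
      · apply mem_of_congr hM m1 hs (by simp)
        apply forall_four <;> simp <;> omega
    · refine sup_le hG.2.1 (Submodule.span_le.2 ?_)
      rintro x rfl
      exact hu

/-- The permutation isometry. -/
def permIso (σ : Equiv.Perm (Fin 4)) : E 4 ≃ₗᵢ[ℝ] E 4 :=
  LinearIsometryEquiv.piLpCongrLeft 2 ℝ ℝ σ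

lemma permIso_apply (σ : Equiv.Perm (Fin 4)) (x : E 4) (i : Fin 4) :
    permIso σ x i = x (σ.symm i) := by
  simp [permIso, LinearIsometryEquiv.piLpCongrLeft_apply, Equiv.piCongrLeft']

lemma sum_perm {R : Type*} [AddCommMonoid R] (σ : Equiv.Perm (Fin 4)) (x : Fin 4 → R) :
    x (σ 0) + x (σ 1) + x (σ 2) + x (σ 3) = x 0 + x 1 + x 2 + x 3 := by
  rw [← Fin.sum_univ_four, ← Fin.sum_univ_four (fun i => x (σ i)), Equiv.sum_comp]

/-- The image of a lattice by a permutation. -/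
def permLat (σ : Equiv.Perm (Fin 4)) (L : Submodule ℤ (E 4)) : Submodule ℤ (E 4) :=
  L.map ((permIso σ).toLinearEquiv.toLinearMap.restrictScalars ℤ)

lemma mem_permLat (σ : Equiv.Perm (Fin 4)) (L : Submodule ℤ (E 4)) (x : E 4) :
    x ∈ permLat σ L ↔ ∃ y ∈ L, permIso σ y = x := by
  simp [permLat]

lemma good_permLat (σ : Equiv.Perm (Fin 4)) (L : Submodule ℤ (E 4)) (hG : Good L) :
    Good (permLat σ L) := by
  refine ⟨?_, ?_, ?_⟩
  · intro x hx y hy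
    rw [mem_permLat] at hx hy
    obtain ⟨x, hx, rfl⟩ := hx
    obtain ⟨y, hy, rfl⟩ := hy
    rw [LinearIsometryEquiv.inner_map_map]
    exact hG.1 x hx y hy
  · refine Submodule.span_le.2 ?_
    rintro v ⟨x, hx, rfl⟩
    rw [SetLike.mem_coe, mem_permLat]
    refine ⟨Real.sqrt 2 • intVec (fun i => x (σ i)),
      hG.2.1 (Submodule.subset_span ⟨_, ?_, rfl⟩), ?_⟩
    · rw [sum_perm σ x]; exact hx
    · ext i
      simp [permIso_apply, intVec]
  · intro x hx
    rw [mem_permLat] at hx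
    obtain ⟨x, hx, rfl⟩ := hx
    simp only [permIso_apply]
    rw [sum_perm σ.symm (fun i => x i)]
    exact hG.2.2 x hx

lemma isometric_of_permLat (σ : Equiv.Perm (Fin 4)) (L : Submodule ℤ (E 4)) :
    IsometricLattices L (permLat σ L) := by
  refine ⟨permIso σ, ?_⟩
  ext x
  simp [mem_permLat]

/-- From a vector with exactly two odd coordinates, `L` can be rotated to contain `u12`. -/
lemma case_two (L : Submodule ℤ (E 4)) (hG : Good L) (y : Fin 4 → ℤ)
    (hs : y 0 + y 1 + y 2 + y 3 = 0) (hy : hv y ∈ L) (σ : Equiv.Perm (Fin 4))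
    (h0 : ¬ 2 ∣ y (σ 0)) (h1 : ¬ 2 ∣ y (σ 1)) (h2 : 2 ∣ y (σ 2)) :
    IsometricLattices L (Λ3 ⊔ Submodule.span ℤ {u12}) ∨
    IsometricLattices L (Λ3 ⊔ Submodule.span ℤ {u12, u34}) := by
  have hG' := good_permLat σ.symm L hG
  have hs' : y (σ 0) + y (σ 1) + y (σ 2) + y (σ 3) = 0 := by rw [sum_perm σ y]; exact hs
  have hmem : hv (fun i => y (σ i)) ∈ permLat σ.symm L := by
    rw [mem_permLat]
    refine ⟨_, hy, ?_⟩
    ext i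
    simp [permIso_apply, hv_apply]
  have hu : u12 ∈ permLat σ.symm L := by
    rw [u12_eq]
    apply hG'.hv_congr hmem hs' (by simp)
    apply forall_four <;> simp <;> omega
  rcases case_u12 _ hG' hu with h | h
  · left; rw [← h]; exact isometric_of_permLat _ _
  · right; rw [← h]; exact isometric_of_permLat _ _

lemma exists_two_odd (y : Fin 4 → ℤ) (hs : y 0 + y 1 + y 2 + y 3 = 0)
    (hne : ∃ i j, 2 ∣ y i ∧ ¬ 2 ∣ y j) :
    ∃ σ : Equiv.Perm (Fin 4), ¬ 2 ∣ y (σ 0) ∧ ¬ 2 ∣ y (σ 1) ∧ 2 ∣ y (σ 2) := by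
  have key : ∀ p : Fin 4 → Bool, (∃ i j, p i = true ∧ p j = false) →
      (xor (p 0) (xor (p 1) (xor (p 2) (p 3)))) = false →
      ∃ σ : Equiv.Perm (Fin 4), p (σ 0) = false ∧ p (σ 1) = false ∧ p (σ 2) = true := by
    decide
  have := key (fun i => decide (2 ∣ y i)) (by simpa using hne) (by
    by_cases h0 : 2 ∣ y 0 <;> by_cases h1 : 2 ∣ y 1 <;> by_cases h2 : 2 ∣ y 2 <;>
      by_cases h3 : 2 ∣ y 3 <;> simp [h0, h1, h2, h3] <;> omega)
  simpa using this

/-- Every integral lattice `L` with `Λ₃ ⊆ L ⊆ V = {x : x 0 + x 1 + x 2 + x 3 = 0}` is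
isometric to one of the four lattices `Λ₃`, `Λ₃ + ℤ·(ε1-ε2)/√2`,
`Λ₃ + ℤ·(ε1-ε2+ε3-ε4)/√2`, `Λ₃ + ℤ·(ε1-ε2)/√2 + ℤ·(ε3-ε4)/√2`. -/
theorem integral_lattices_containing_Λ3 (L : Submodule ℤ (E 4))
    (hL : LatticeIsIntegral L) (hΛ : Λ3 ≤ L) (hV : ∀ x ∈ L, x 0 + x 1 + x 2 + x 3 = 0) :
    IsometricLattices L Λ3 ∨
    IsometricLattices L (Λ3 ⊔ Submodule.span ℤ {u12}) ∨
    IsometricLattices L (Λ3 ⊔ Submodule.span ℤ {w}) ∨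
    IsometricLattices L (Λ3 ⊔ Submodule.span ℤ {u12, u34}) := by
  have hG : Good L := ⟨hL, hΛ, hV⟩
  by_cases hA : ∃ y : Fin 4 → ℤ, y 0 + y 1 + y 2 + y 3 = 0 ∧ hv y ∈ L ∧
      ∃ i j, 2 ∣ y i ∧ ¬ 2 ∣ y j
  · obtain ⟨y, hs, hy, hne⟩ := hA
    obtain ⟨σ, h0, h1, h2⟩ := exists_two_odd y hs hne
    rcases case_two L hG y hs hy σ h0 h1 h2 with h | h
    · exact Or.inr (Or.inl h)
    · exact Or.inr (Or.inr (Or.inr h))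
  · push Not at hA
    by_cases hB : ∃ y : Fin 4 → ℤ, y 0 + y 1 + y 2 + y 3 = 0 ∧ hv y ∈ L ∧ ¬ 2 ∣ y 0
    · obtain ⟨y, hs, hy, hy0⟩ := hB
      have hodd : ∀ i, ¬ 2 ∣ y i := fun i hi => hy0 (hA y hs hy i 0 hi)
      have hw : hv ![1, -1, 1, -1] ∈ L := by
        have := hodd 0; have := hodd 1; have := hodd 2; have := hodd 3
        apply hG.hv_congr hy hs (by simp)
        apply forall_four <;> simp <;> omega
      have hLw : L = Λ3 ⊔ Submodule.span ℤ {w} := by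
        apply le_antisymm
        · intro x hx
          obtain ⟨z, hz, rfl⟩ := hG.exists_hv hx
          have hM : Λ3 ≤ Λ3 ⊔ Submodule.span ℤ {w} := le_sup_left
          have m1 : w ∈ Λ3 ⊔ Submodule.span ℤ {w} :=
            (le_sup_right : _ ≤ Λ3 ⊔ _) (Submodule.subset_span (by simp))
          rw [w_eq] at m1 hM ⊢
          by_cases h0 : 2 ∣ z 0
          · exact hM (hv_mem_Λ3 _ hz (fun i => hA z hz hx 0 i h0))
          · have hodd : ∀ i, ¬ 2 ∣ z i := fun i hi => h0 (hA z hz hx i 0 hi)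
            have := hodd 0; have := hodd 1; have := hodd 2; have := hodd 3
            apply mem_of_congr hM m1 hz (by simp)
            apply forall_four <;> simp <;> omega
        · refine sup_le hG.2.1 (Submodule.span_le.2 ?_)
          rintro x rfl
          rw [w_eq]
          exact hw
      right; right; left
      rw [← hLw]
      exact isometric_refl L
    · push Not at hB
      left
      have : L = Λ3 := by
        apply le_antisymm
        · intro x hx
          obtain ⟨z, hz, rfl⟩ := hG.exists_hv hx
          exact hv_mem_Λ3 _ hz (fun i => hA z hz hx 0 i (hB z hz hx))
        · exact hΛ
      rw [← this]
      exact isometric_refl L
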